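/- Every SGQC code C of block length (t₁, …, t_l) over S is generated by at most l codewords of upper-triangular form: there exist g₁, …, g_l ∈ C such that the j-th block component of g_i is 0 whenever j > i, the i-th block component of g_i generates K_i as a skew cyclic code of length t_i over S, and C is the smallest S-submodule of 𝐒 containing {g₁, …, g_l} and closed under σ_l. -/

import Mathlib

/-!
The `θ`-shift turns `S^n` into `S[x; θ] / S[x; θ](x^n - 1)`, and two facts give the theorem.

* Every skew cyclic code over `S` has a single generator (`exists_gen`). Since `θ` fixes `v`, a code
  splits along the orthogonal idempotents `v` and `1 - v`, and each of `vS`, `(1 - v)S` is a copy of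
  the field `F`. On one such part, a nonzero codeword `g` of minimal degree generates: a codeword of
  degree `m` is reduced by a multiple of `σ^k g`, where `k = m - deg g`; as `m < n`, this shift does
  not wrap around (`exists_gen_part`). Adding the generators of the two parts gives a generator of
  the code.
* The section codes `K_i` (`sectionCode`) are skew cyclic, so they have generators, which lift to
  codewords `g_i ∈ C` vanishing in the blocks after the `i`-th. If `P` is a shift-closed submodule
  containing all the `g_i`, then `K_i` is contained in the `i`-th section code of `P ⊓ C`, so the
  last nonzero block of any codeword of `C` can be cleared by an element of `P ⊓ C`; induction on
  the number of nonzero blocks gives `C ≤ P`.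
-/

open Polynomial

noncomputable section

/-- The ring `S = F[V]/(V² − V) = F + vF`. -/
abbrev Sring (F : Type) [Field F] : Type := AdjoinRoot (X ^ 2 - X : F[X])

/-- The element `v` (the image of `V`) in `S`, satisfying `v ^ 2 = v`. -/
def vS (F : Type) [Field F] : Sring F := AdjoinRoot.root (X ^ 2 - X : F[X])

/-- The skew cyclic shift `σ(c₀, …, c_{n−1}) = (θ(c_{n−1}), θ(c₀), …, θ(c_{n−2}))`. -/
def sShift {R : Type} (θ : R → R) {n : ℕ} (c : Fin n → R) : Fin n → R :=
  fun i => θ (c ((finRotate n).symm i))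

/-- The blockwise skew shift `σ_l`. -/
def blockShift {R : Type} (θ : R → R) {l : ℕ} {t : Fin l → ℕ}
    (c : ∀ j : Fin l, Fin (t j) → R) : ∀ j : Fin l, Fin (t j) → R :=
  fun j => sShift θ (c j)

/-- `θ` is the Galois automorphism `a + v·b ↦ a^{p^t} + v·b^{p^t}` of `S`. -/
def IsGaloisAut (p t : ℕ) {F : Type} [Field F] (θ : RingAut (Sring F)) : Prop :=
  ∀ a b : F,
    θ (algebraMap F (Sring F) a + vS F * algebraMap F (Sring F) b) =
      algebraMap F (Sring F) (a ^ p ^ t) + vS F * algebraMap F (Sring F) (b ^ p ^ t)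

/-- A set is an SGQC code iff it is (the carrier of) a submodule closed under `σ_l`. -/
def IsSGQC {R : Type} [CommRing R] (θ : R → R) {l : ℕ} {t : Fin l → ℕ}
    (C : Set (∀ j : Fin l, Fin (t j) → R)) : Prop :=
  ∃ M : Submodule R (∀ j : Fin l, Fin (t j) → R),
    (M : Set (∀ j : Fin l, Fin (t j) → R)) = C ∧ ∀ c ∈ M, blockShift θ c ∈ M

/-- A set is a skew cyclic code iff it is (the carrier of) a submodule closed under `σ`. -/
def IsSkewCyclic {R : Type} [CommRing R] (θ : R → R) {n : ℕ} (K : Set (Fin n → R)) : Prop :=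
  ∃ M : Submodule R (Fin n → R), (M : Set (Fin n → R)) = K ∧ ∀ x ∈ M, sShift θ x ∈ M

/-- The Euclidean inner product. -/
def euclidInner {R : Type} [CommRing R] {l : ℕ} {t : Fin l → ℕ}
    (a b : ∀ j : Fin l, Fin (t j) → R) : R :=
  ∑ j, ∑ i, a j i * b j i

/-- The Hamming weight: the number of nonzero coordinates (over all blocks). -/
def hammingWt {R : Type} [CommRing R] {l : ℕ} {t : Fin l → ℕ}
    (x : ∀ j : Fin l, Fin (t j) → R) : ℕ :=
  ∑ j, Nat.card {i : Fin (t j) // x j i ≠ 0}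

/-- The SGQC code generated by a set: the smallest submodule containing it closed under `σ_l`. -/
def sgqcGen {R : Type} [CommRing R] (θ : R → R) {l : ℕ} {t : Fin l → ℕ}
    (X : Set (∀ j : Fin l, Fin (t j) → R)) : Submodule R (∀ j : Fin l, Fin (t j) → R) :=
  sInf {M | X ⊆ (M : Set _) ∧ ∀ c ∈ M, blockShift θ c ∈ M}

/-- The skew cyclic code generated by a set: the smallest submodule containing it closed under `σ`. -/
def scGen {R : Type} [CommRing R] (θ : R → R) {n : ℕ} (X : Set (Fin n → R)) :
    Submodule R (Fin n → R) :=
  sInf {M | X ⊆ (M : Set _) ∧ ∀ x ∈ M, sShift θ x ∈ M}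

/-- The `w`-th Hermitian coefficient `H_w(u, v)`. -/
def hermCoeff {R : Type} [CommRing R] (θ : R → R) {l : ℕ} {t : Fin l → ℕ}
    (ht : ∀ j, 0 < t j) (w : ℕ) (u v : ∀ j : Fin l, Fin (t j) → R) : R :=
  ∑ j, ∑ i : Fin (t j), u j ⟨((i : ℕ) + w) % t j, Nat.mod_lt _ (ht j)⟩ * θ^[w] (v j i)

section Gen

variable {R : Type} [CommRing R] (θ : RingAut R)

/-- Away from the first `k` coordinates, `σ^k` is a shift by `k` without wrap-around. -/
theorem sShift_iterate_apply {n : ℕ} (c : Fin n → R) (k : ℕ) (i : Fin n) (h : k ≤ i) :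
    (sShift (⇑θ))^[k] c i = (⇑θ)^[k] (c ⟨i - k, by omega⟩) := by
  induction k generalizing i with
  | zero => rfl
  | succ k ih =>
    have hs : (finRotate n).symm i = ⟨i - 1, by omega⟩ := by
      rw [Equiv.symm_apply_eq]
      obtain ⟨n, rfl⟩ : ∃ m, n = m + 1 := ⟨n - 1, by have := i.2; omega⟩
      rw [finRotate_of_lt (by have := i.2; omega)]
      ext
      simp only
      omega
    rw [Function.iterate_succ_apply', Function.iterate_succ_apply']
    change θ _ = _
    rw [hs, ih _ (by simp only; omega)]
    simp only [Nat.sub_sub, Nat.add_comm]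

theorem iterate_mem {M : Type} {σ : M → M} {P : Set M} (hP : ∀ x ∈ P, σ x ∈ P) (k : ℕ) {x : M}
    (hx : x ∈ P) : σ^[k] x ∈ P := by
  induction k with
  | zero => exact hx
  | succ k ih =>
    rw [Function.iterate_succ_apply']
    exact hP _ ih

/-- If `e` is fixed by `θ` and the nonzero elements of `eR` are invertible in `eR`, then the
`e`-part of a skew cyclic code has a single generator, namely a nonzero element of minimal degree
(or `0` if the part is trivial). -/
theorem exists_gen_part {n : ℕ} (e : R) (he : θ e = e)
    (hinv : ∀ x, e * x = x → x ≠ 0 → ∃ y, y * x = e)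
    (M : Submodule R (Fin n → R)) (hM : ∀ x ∈ M, sShift (⇑θ) x ∈ M) :
    ∃ g ∈ M, e • g = g ∧ ∀ P : Submodule R (Fin n → R), (∀ x ∈ P, sShift (⇑θ) x ∈ P) → g ∈ P →
      ∀ a ∈ M, e • a = a → a ∈ P := by
  classical
  by_cases hex : ∃ r : ℕ, ∃ g ∈ M, e • g = g ∧ g ≠ 0 ∧ ∀ i : Fin n, r ≤ i → g i = 0
  swap
  · refine ⟨0, M.zero_mem, by simp, fun P _ h0 a ha hea => ?_⟩
    by_cases h : a = 0
    · rwa [h]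
    · exact absurd ⟨n, a, ha, hea, h, fun i hi => absurd i.2 (by omega)⟩ hex
  obtain ⟨g, hgM, heg, hg0, hgr⟩ := Nat.find_spec hex
  have hmin := fun m => Nat.find_min hex (m := m)
  generalize Nat.find hex = r at hgr hmin
  refine ⟨g, hgM, heg, fun P hP hgP a ha hea => ?_⟩
  suffices H : ∀ m : ℕ, ∀ a ∈ M, e • a = a → (∀ i : Fin n, m ≤ i → a i = 0) → a ∈ P from
    H n a ha hea fun i hi => absurd i.2 (by omega)
  intro m
  induction m with
  | zero =>
    intro a _ _ h
    rw [show a = 0 from funext fun i => h i (Nat.zero_le _)]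
    exact P.zero_mem
  | succ m ih =>
    intro a ha hea h
    by_cases hm : ∀ i : Fin n, m ≤ i → a i = 0
    · exact ih a ha hea hm
    push Not at hm
    obtain ⟨i₀, hi₀, hai₀⟩ := hm
    have hi₀m : (i₀ : ℕ) = m := by
      by_contra hne
      exact hai₀ (h i₀ (by omega))
    have ha0 : a ≠ 0 := fun h0 => hai₀ (by rw [h0]; rfl)
    have hrm : r ≤ m + 1 := by
      by_contra hlt
      exact hmin (m + 1) (by omega) ⟨a, ha, hea, ha0, h⟩
    have hr : 0 < r := by
      rcases Nat.eq_zero_or_pos r with h0 | h0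
      · exact absurd (funext fun i => hgr i (by omega)) hg0
      · exact h0
    obtain ⟨k, hk⟩ : ∃ k, k + r = m + 1 := ⟨m + 1 - r, by omega⟩
    set b := (sShift (⇑θ))^[k] g with hb
    have hbM : b ∈ M := iterate_mem (P := (M : Set (Fin n → R))) hM k hgM
    have hbP : b ∈ P := iterate_mem (P := (P : Set (Fin n → R))) hP k hgP
    have hbi : ∀ i : Fin n, m + 1 ≤ i → b i = 0 := by
      intro i hi
      rw [hb, sShift_iterate_apply θ g k i (by omega), hgr _ (by simp only; omega)]
      exact iterate_map_zero θ k
    have hlead : g ⟨i₀ - k, by omega⟩ ≠ 0 := by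
      intro h0
      refine hmin (r - 1) (by omega) ⟨g, hgM, heg, hg0, fun i hi => ?_⟩
      by_cases hir : r ≤ i
      · exact hgr i hir
      · rwa [show i = ⟨i₀ - k, by omega⟩ from Fin.ext (by simp only; omega)]
    have hbm : b i₀ = (⇑θ)^[k] (g ⟨i₀ - k, by omega⟩) :=
      sShift_iterate_apply θ g k i₀ (by omega)
    have hbm0 : b i₀ ≠ 0 := by
      rw [hbm, ← iterate_map_zero θ k]
      exact fun h0 => hlead (θ.injective.iterate k h0)
    have hebm : e * b i₀ = b i₀ := by
      rw [hbm]
      conv_rhs => rw [← congrFun heg ⟨i₀ - k, by omega⟩]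
      rw [Pi.smul_apply, smul_eq_mul, iterate_map_mul, Function.iterate_fixed he]
    obtain ⟨y, hy⟩ := hinv _ hebm hbm0
    have hea' : ∀ i, e * a i = a i := fun i => congrFun hea i
    -- `y * a i₀ * b i₀ = e * a i₀ = a i₀`, so subtracting `(y * a i₀) • b` clears coordinate `i₀`.
    have key : a - (y * a i₀) • b ∈ P := by
      refine ih _ (M.sub_mem ha (M.smul_mem _ hbM)) ?_ ?_
      · rw [smul_sub, hea, smul_smul, mul_left_comm, hea']
      · intro i hi
        by_cases him : i = i₀
        · subst him
          simp only [Pi.sub_apply, Pi.smul_apply, smul_eq_mul]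
          linear_combination (- a i) * hy - hea' i
        · have : m + 1 ≤ (i : ℕ) := by
            have : (i : ℕ) ≠ i₀ := fun hh => him (Fin.ext hh)
            omega
          simp [h i this, hbi i this]
    simpa using P.add_mem key (P.smul_mem (y * a i₀) hbP)

/-- If `R` splits along an idempotent `e` fixed by `θ` into two fields, then every skew cyclic code
over `R` has a single generator. -/
theorem exists_gen {n : ℕ} (e : R) (hee : e * e = e) (he : θ e = e)
    (hinv : ∀ x, e * x = x → x ≠ 0 → ∃ y, y * x = e)
    (hinv' : ∀ x, (1 - e) * x = x → x ≠ 0 → ∃ y, y * x = 1 - e)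
    (M : Submodule R (Fin n → R)) (hM : ∀ x ∈ M, sShift (⇑θ) x ∈ M) :
    ∃ g ∈ M, scGen (⇑θ) {g} = M := by
  obtain ⟨g, hg, heg, H⟩ := exists_gen_part θ e he hinv M hM
  obtain ⟨g', hg', heg', H'⟩ := exists_gen_part θ (1 - e) (by simp [he]) hinv' M hM
  have hadd := M.add_mem hg hg'
  refine ⟨g + g', hadd, le_antisymm (sInf_le ⟨by simpa using hadd, hM⟩) (le_sInf ?_)⟩
  rintro P ⟨hgP, hP⟩ a ha
  have hgg : g + g' ∈ P := by simpa using hgP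
  have h1 : e • (g + g') = g := by
    rw [smul_add, heg, ← heg', smul_smul, show e * (1 - e) = 0 by linear_combination -hee, zero_smul,
      add_zero]
  have h2 : (1 - e) • (g + g') = g' := by
    rw [sub_smul, one_smul, h1, add_sub_cancel_left]
  have ha1 := H P hP (h1 ▸ P.smul_mem e hgg) (e • a) (M.smul_mem _ ha) (by rw [smul_smul, hee])
  have ha2 := H' P hP (h2 ▸ P.smul_mem (1 - e) hgg) ((1 - e) • a) (M.smul_mem _ ha)
    (by rw [smul_smul, show (1 - e) * (1 - e) = 1 - e by linear_combination hee])
  simpa [sub_smul] using P.add_mem ha1 ha2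

theorem sShift_zero {n : ℕ} : sShift (⇑θ) (0 : Fin n → R) = 0 :=
  funext fun _ => map_zero θ

variable {l : ℕ} {t : Fin l → ℕ}

/-- The section code `K_i` of `C`: the `i`-th blocks of the codewords whose later blocks vanish. -/
def sectionCode (C : Submodule R (∀ j : Fin l, Fin (t j) → R)) (i : Fin l) :
    Submodule R (Fin (t i) → R) where
  carrier := {x | ∃ c ∈ C, c i = x ∧ ∀ j : Fin l, i < j → c j = 0}
  zero_mem' := ⟨0, C.zero_mem, rfl, fun _ _ => rfl⟩
  add_mem' := by
    rintro _ _ ⟨c, hc, rfl, h⟩ ⟨c', hc', rfl, h'⟩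
    exact ⟨c + c', C.add_mem hc hc', rfl, fun j hj => by simp [h j hj, h' j hj]⟩
  smul_mem' := by
    rintro r _ ⟨c, hc, rfl, h⟩
    exact ⟨r • c, C.smul_mem r hc, rfl, fun j hj => by simp [h j hj]⟩

theorem sShift_mem_sectionCode {C : Submodule R (∀ j : Fin l, Fin (t j) → R)}
    (hC : ∀ c ∈ C, blockShift (⇑θ) c ∈ C) (i : Fin l) :
    ∀ x ∈ sectionCode C i, sShift (⇑θ) x ∈ sectionCode C i := by
  rintro _ ⟨c, hc, rfl, h⟩
  refine ⟨_, hC c hc, rfl, fun j hj => ?_⟩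
  change sShift (⇑θ) (c j) = 0
  rw [h j hj, sShift_zero]

/-- Triangular codewords whose diagonal blocks generate the section codes generate the code. -/
theorem le_of_triangular {C P : Submodule R (∀ j : Fin l, Fin (t j) → R)}
    (hC : ∀ c ∈ C, blockShift (⇑θ) c ∈ C) (hP : ∀ c ∈ P, blockShift (⇑θ) c ∈ P)
    {g : Fin l → ∀ j : Fin l, Fin (t j) → R} (hgC : ∀ i, g i ∈ C) (hgP : ∀ i, g i ∈ P)
    (htri : ∀ i j : Fin l, i < j → g i j = 0)
    (hgen : ∀ i, scGen (⇑θ) {g i i} = sectionCode C i) : C ≤ P := by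
  have hsec : ∀ i, sectionCode C i ≤ sectionCode (P ⊓ C) i := by
    intro i
    rw [← hgen]
    refine sInf_le ⟨?_, sShift_mem_sectionCode θ (C := P ⊓ C) (fun c hc => ⟨hP c hc.1, hC c hc.2⟩) i⟩
    rw [Set.singleton_subset_iff]
    exact ⟨g i, ⟨hgP i, hgC i⟩, rfl, htri i⟩
  suffices H : ∀ m : ℕ, ∀ c ∈ C, (∀ j : Fin l, m ≤ j → c j = 0) → c ∈ P from
    fun c hc => H l c hc fun j hj => absurd j.2 (by omega)
  intro m
  induction m with
  | zero =>
    intro c _ h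
    rw [show c = 0 from funext fun j => h j (Nat.zero_le _)]
    exact P.zero_mem
  | succ m ih =>
    intro c hc h
    by_cases hml : m < l
    swap
    · exact ih c hc fun j hj => absurd j.2 (by omega)
    obtain ⟨b, ⟨hbP, hbC⟩, hbi, hb⟩ := hsec ⟨m, hml⟩ ⟨c, hc, rfl, fun j hj => h j hj⟩
    have key : c - b ∈ P := by
      refine ih _ (C.sub_mem hc hbC) fun j hj => ?_
      rcases hj.eq_or_lt with hj | hj
      · obtain rfl : j = ⟨m, hml⟩ := Fin.ext hj.symm
        simp [hbi]
      · simp [h j hj, hb j hj]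
    simpa using P.add_mem key hbP

end Gen

section Sring

variable {F : Type} [Field F]

theorem vS_mul_self : vS F * vS F = vS F := by
  have h := AdjoinRoot.eval₂_root (X ^ 2 - X : F[X])
  simp only [eval₂_sub, eval₂_pow, eval₂_X] at h
  rw [← sq]
  exact sub_eq_zero.mp h

theorem Sring_repr (x : Sring F) :
    ∃ a b : F, x = algebraMap F (Sring F) a + vS F * algebraMap F (Sring F) b := by
  induction x using AdjoinRoot.induction_on with
  | ih f =>
    induction f using Polynomial.induction_on' with
    | add f g hf hg =>
      obtain ⟨a, b, h⟩ := hf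
      obtain ⟨a', b', h'⟩ := hg
      exact ⟨a + a', b + b', by rw [map_add, h, h', map_add, map_add]; ring⟩
    | monomial n c =>
      have hm : AdjoinRoot.mk (X ^ 2 - X : F[X]) (monomial n c) =
          algebraMap F (Sring F) c * vS F ^ n := by
        rw [← C_mul_X_pow_eq_monomial, map_mul, map_pow]
        rfl
      rw [hm]
      rcases n with _ | n
      · exact ⟨c, 0, by simp⟩
      · exact ⟨0, c, by rw [(show IsIdempotentElem (vS F) from vS_mul_self).pow_succ_eq]; simp [mul_comm]⟩

theorem Sring_inv_v (x : Sring F) (hx : vS F * x = x) (h0 : x ≠ 0) : ∃ y, y * x = vS F := by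
  obtain ⟨a, b, rfl⟩ := Sring_repr x
  have hv := vS_mul_self (F := F)
  have hx' : algebraMap F (Sring F) a + vS F * algebraMap F (Sring F) b =
      vS F * algebraMap F (Sring F) (a + b) := by
    rw [← hx, map_add]
    linear_combination algebraMap F (Sring F) b * hv
  have hab : a + b ≠ 0 := fun h => h0 (by rw [hx', h, map_zero, mul_zero])
  refine ⟨algebraMap F (Sring F) (a + b)⁻¹, ?_⟩
  rw [hx', mul_left_comm, ← map_mul, inv_mul_cancel₀ hab, map_one, mul_one]

theorem Sring_inv_one_sub_v (x : Sring F) (hx : (1 - vS F) * x = x) (h0 : x ≠ 0) :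
    ∃ y, y * x = 1 - vS F := by
  obtain ⟨a, b, rfl⟩ := Sring_repr x
  have hv := vS_mul_self (F := F)
  have hx' : algebraMap F (Sring F) a + vS F * algebraMap F (Sring F) b =
      (1 - vS F) * algebraMap F (Sring F) a := by
    rw [← hx]
    linear_combination (-algebraMap F (Sring F) b) * hv
  have ha : a ≠ 0 := fun h => h0 (by rw [hx', h, map_zero, mul_zero])
  refine ⟨algebraMap F (Sring F) a⁻¹, ?_⟩
  rw [hx', mul_left_comm, ← map_mul, inv_mul_cancel₀ ha, map_one, mul_one]

theorem IsGaloisAut.map_vS {p t : ℕ} (hp : p ≠ 0) {θ : RingAut (Sring F)}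
    (hθ : IsGaloisAut p t θ) : θ (vS F) = vS F := by
  simpa only [zero_pow (pow_ne_zero t hp), one_pow, map_zero, map_one, mul_one, zero_add] using hθ 0 1

end Sring

/-- Every SGQC code `C` of block length `(t₁, …, t_l)` over `S` is generated
by at most `l` codewords `g₁, …, g_l` in upper-triangular form: the `j`-th block of `g_i`
vanishes for `j > i`, the `i`-th block of `g_i` generates the section code `K_i` as a skew
cyclic code, and `C` is the smallest shift-closed submodule containing `{g₁, …, g_l}`. -/
theorem statement15 (p d t : ℕ) [Fact p.Prime] (hd : 0 < d)
    (F : Type) [Field F] [Fintype F] (hF : Fintype.card F = p ^ d)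
    (θ : RingAut (Sring F)) (hθ : IsGaloisAut p t θ)
    (l : ℕ) (tt : Fin l → ℕ) (htt : ∀ j, 0 < tt j)
    (C : Submodule (Sring F) (∀ j : Fin l, Fin (tt j) → Sring F))
    (hC : ∀ c ∈ C, blockShift (⇑θ) c ∈ C) :
    ∃ g : Fin l → ∀ j : Fin l, Fin (tt j) → Sring F,
      (∀ i, g i ∈ C) ∧
      (∀ i j : Fin l, i < j → g i j = 0) ∧
      (∀ i : Fin l,
        (scGen (⇑θ) {g i i} : Set (Fin (tt i) → Sring F)) =
          {pv : Fin (tt i) → Sring F |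
            ∃ c ∈ C, c i = pv ∧ ∀ j : Fin l, i < j → c j = 0}) ∧
      C = sgqcGen (⇑θ) (Set.range g) := by
  have hsec : ∀ i, ∃ x ∈ sectionCode C i, scGen (⇑θ) {x} = sectionCode C i := fun i =>
    exists_gen θ (vS F) vS_mul_self (hθ.map_vS (Fact.out : p.Prime).ne_zero) Sring_inv_v
      Sring_inv_one_sub_v _ (sShift_mem_sectionCode θ hC i)
  choose x hx hgen using hsec
  choose g hgC hgx htri using hx
  have hgen' : ∀ i, scGen (⇑θ) {g i i} = sectionCode C i := fun i => by rw [hgx, hgen]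
  refine ⟨g, hgC, htri, fun i => by rw [hgen']; rfl, le_antisymm (le_sInf ?_) (sInf_le ?_)⟩
  · rintro P ⟨hgP, hP⟩
    exact le_of_triangular θ hC hP hgC (fun i => hgP ⟨i, rfl⟩) htri hgen'
  · exact ⟨Set.range_subset_iff.mpr hgC, hC⟩
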